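/- arXiv:2603.09462 — 6 statements merged into one kernel-verified Lean document; each statement's English description precedes it below -/
import Mathlib

section
/- Let μ be a finite Borel measure on ℝⁿ whose support X is compact, Zariski dense in ℝⁿ, and has positive total mass μ(X) > 0. Let z ∈ ℝⁿ with z ∉ X, set δ := min { ‖z − y‖ : y ∈ X } and ρ := max { ‖z − y‖ : y ∈ X }, and assume δ < ρ. Let φ : ℝⁿ → [0, ∞) be a Lebesgue-integrable function supported in the closed ball of radius ε around z, where 0 < ε < δ/2. For a natural number d define S_d(z) := sup { (∫_{ℝⁿ} φ(y) p(y) dλ(y))² : p is a real polynomial of total degree at most d with ∫ p(y)² dμ(y) = 1 }. Then S_d(z) ≥ (1 + 3δ² / (4(ρ² − δ²)))^{2⌊d/2⌋} · (∫_{B(z, δ/2)} φ(y) dλ(y))² / μ(X), where B(z, δ/2) is the closed Euclidean ball of radius δ/2 around z. In particular S_d(z) grows at least exponentially in d. -/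
open MeasureTheory MvPolynomial

/-- The support of a Borel measure. -/
def measureSupport {α : Type*} [TopologicalSpace α] [MeasurableSpace α]
    (μ : Measure α) : Set α :=
  {x | ∀ U : Set α, IsOpen U → x ∈ U → μ U ≠ 0}

lemma fd_bound {V H : Type*} [AddCommGroup V] [Module ℝ V] [FiniteDimensional ℝ V]
    [NormedAddCommGroup H] [NormedSpace ℝ H] (T : V →ₗ[ℝ] H) (hT : Function.Injective T)
    (L : V →ₗ[ℝ] ℝ) : ∃ C : ℝ, ∀ v, |L v| ≤ C * ‖T v‖ := by
  let e := LinearEquiv.ofInjective T hT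
  let M : LinearMap.range T →ₗ[ℝ] ℝ := L ∘ₗ e.symm.toLinearMap
  let M' := LinearMap.toContinuousLinearMap M
  refine ⟨‖M'‖, fun v => ?_⟩
  have h := M'.le_opNorm (e v)
  have h1 : M' (e v) = L v := by simp [M', M]
  have h2 : ‖e v‖ = ‖T v‖ := by simp [e]
  rwa [h1, h2, Real.norm_eq_abs] at h

lemma measureSupport_ae {n : ℕ} (μ : Measure (EuclideanSpace ℝ (Fin n))) :
    ∀ᵐ x ∂μ, x ∈ measureSupport μ := by
  have : μ (measureSupport μ)ᶜ = 0 := by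
    apply measure_null_of_locally_null
    intro x hx
    simp only [measureSupport, Set.mem_compl_iff, Set.mem_ofPred_eq, not_forall, not_not] at hx
    obtain ⟨U, hU, hxU, h0⟩ := hx
    exact ⟨U, mem_nhdsWithin_of_mem_nhds (hU.mem_nhds hxU), h0⟩
  exact this

lemma cont_evalE {n : ℕ} (p : MvPolynomial (Fin n) ℝ) :
    Continuous (fun y : EuclideanSpace ℝ (Fin n) => eval y p) :=
  (MvPolynomial.continuous_eval p).comp (PiLp.continuous_ofLp 2 _)

lemma memLp_eval {n : ℕ} (μ : Measure (EuclideanSpace ℝ (Fin n))) [IsFiniteMeasure μ]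
    (hXc : IsCompact (measureSupport μ)) (p : MvPolynomial (Fin n) ℝ) :
    MemLp (fun y : EuclideanSpace ℝ (Fin n) => eval y p) 2 μ := by
  obtain ⟨C, hC⟩ := hXc.exists_bound_of_continuousOn (cont_evalE p).continuousOn
  refine MemLp.of_bound (cont_evalE p).aestronglyMeasurable C ?_
  filter_upwards [measureSupport_ae μ] with x hx using hC x hx

lemma integrable_phi {n : ℕ} (z : EuclideanSpace ℝ (Fin n))
    (φ : EuclideanSpace ℝ (Fin n) → ℝ) (hφint : Integrable φ volume) (ε : ℝ)
    (hφsupp : Function.support φ ⊆ Metric.closedBall z ε) (p : MvPolynomial (Fin n) ℝ) :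
    Integrable (fun y => φ y * eval y p) volume := by
  obtain ⟨C, hC⟩ := (isCompact_closedBall z ε).exists_bound_of_continuousOn
    (cont_evalE p).continuousOn
  refine Integrable.mono' (hφint.norm.mul_const C)
    (hφint.aestronglyMeasurable.mul (cont_evalE p).aestronglyMeasurable)
    (Filter.Eventually.of_forall fun y => ?_)
  by_cases h : φ y = 0
  · simp [h]
  · rw [norm_mul]
    exact mul_le_mul_of_nonneg_left (hC y (hφsupp h)) (norm_nonneg _)

lemma eq_zero_of_ae {n : ℕ} (μ : Measure (EuclideanSpace ℝ (Fin n)))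
    (p : MvPolynomial (Fin n) ℝ)
    (h : (fun y : EuclideanSpace ℝ (Fin n) => eval y p) =ᵐ[μ] 0) :
    ∀ x ∈ measureSupport μ, eval x p = 0 := by
  intro x hx
  by_contra hne
  exact hx {y | eval y p ≠ 0} (isOpen_ne_fun (cont_evalE p) continuous_const) hne h

lemma bdd_set {n : ℕ} (μ : Measure (EuclideanSpace ℝ (Fin n))) [IsFiniteMeasure μ]
    (hXc : IsCompact (measureSupport μ))
    (hZar : ∀ p : MvPolynomial (Fin n) ℝ, (∀ x ∈ measureSupport μ, eval x p = 0) → p = 0)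
    (z : EuclideanSpace ℝ (Fin n))
    (φ : EuclideanSpace ℝ (Fin n) → ℝ) (hφint : Integrable φ volume) (ε : ℝ)
    (hφsupp : Function.support φ ⊆ Metric.closedBall z ε) (d : ℕ) :
    BddAbove {t : ℝ | ∃ p : MvPolynomial (Fin n) ℝ, p.totalDegree ≤ d ∧
        (∫ y, (eval y p) ^ 2 ∂μ) = 1 ∧ t = (∫ y, φ y * eval y p) ^ 2} := by
  let T : restrictTotalDegree (Fin n) ℝ d →ₗ[ℝ] Lp ℝ 2 μ :=
    { toFun := fun p => (memLp_eval μ hXc p.1).toLp _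
      map_add' := fun p q => by
        rw [← MemLp.toLp_add]
        congr 1
        ext y; simp
      map_smul' := fun c p => by
        rw [RingHom.id_apply, ← MemLp.toLp_const_smul]
        congr 1
        ext y; simp [smul_eval] }
  let L : restrictTotalDegree (Fin n) ℝ d →ₗ[ℝ] ℝ :=
    { toFun := fun p => ∫ y, φ y * eval y p.1
      map_add' := fun p q => by
        rw [← integral_add (integrable_phi z φ hφint ε hφsupp _)
          (integrable_phi z φ hφint ε hφsupp _)]
        congr 1
        ext y; simp [mul_add]
      map_smul' := fun c p => by
        rw [RingHom.id_apply, smul_eq_mul, ← integral_const_mul]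
        congr 1
        ext y; simp [smul_eval]; ring }
  have hT : Function.Injective T := by
    rw [← LinearMap.ker_eq_bot, LinearMap.ker_eq_bot']
    intro p hp
    have h0 : (memLp_eval μ hXc p.1).toLp _ = 0 := hp
    have h1 := (memLp_eval μ hXc p.1).coeFn_toLp.symm.trans (h0 ▸ Lp.coeFn_zero ℝ 2 μ)
    exact Subtype.ext (hZar _ (eq_zero_of_ae μ _ h1))
  obtain ⟨C, hC⟩ := fd_bound T hT L
  refine ⟨C ^ 2, ?_⟩
  rintro t ⟨p, hpd, hp1, rfl⟩
  have h := hC ⟨p, (mem_restrictTotalDegree _ _ _).2 hpd⟩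
  have hn : ‖T ⟨p, (mem_restrictTotalDegree _ _ _).2 hpd⟩‖ = 1 := by
    have h2 : ‖T ⟨p, (mem_restrictTotalDegree _ _ _).2 hpd⟩‖ ^ 2 = 1 := by
      rw [← real_inner_self_eq_norm_sq, L2.inner_def, ← hp1]
      apply integral_congr_ae
      filter_upwards [(memLp_eval μ hXc p).coeFn_toLp] with y hy
      change inner ℝ (((memLp_eval μ hXc p).toLp _ : Lp ℝ 2 μ) y)
        (((memLp_eval μ hXc p).toLp _ : Lp ℝ 2 μ) y) = _
      rw [hy]
      simp [sq]
    nlinarith [norm_nonneg (T ⟨p, (mem_restrictTotalDegree _ _ _).2 hpd⟩)]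
  rw [hn, mul_one] at h
  exact sq_le_sq' (abs_le.1 h).1 (abs_le.1 h).2

/-- Off-support exponential growth of the support-locator mollified
Christoffel–Darboux polynomial: if `z` lies outside the compact, Zariski
dense support `X` of `μ`, `δ` and `ρ` are the distance and eccentricity of
`z` relative to `X` with `δ < ρ`, and `φ` is a nonnegative integrable
mollifier supported in the closed ball `B(z, ε)` with `0 < ε < δ/2`, then
`SMCD_{d,ε}^μ(z,z) ≥ (1 + 3δ²/(4(ρ² − δ²)))^{2⌊d/2⌋} · (∫_{B(z,δ/2)} φ dλ)² / μ(X)`,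
where `SMCD` is expressed via its variational characterization. -/
theorem smcd_off_support_exponential_growth {n : ℕ}
    (μ : Measure (EuclideanSpace ℝ (Fin n))) [IsFiniteMeasure μ]
    (X : Set (EuclideanSpace ℝ (Fin n))) (hX : X = measureSupport μ)
    (hXc : IsCompact X)
    (hZar : ∀ p : MvPolynomial (Fin n) ℝ, (∀ x ∈ X, eval x p = 0) → p = 0)
    (hXpos : 0 < μ X)
    (z : EuclideanSpace ℝ (Fin n)) (hz : z ∉ X) (δ ρ : ℝ)
    (hδ : IsLeast ((fun y => dist z y) '' X) δ)
    (hρ : IsGreatest ((fun y => dist z y) '' X) ρ)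
    (hδρ : δ < ρ)
    (φ : EuclideanSpace ℝ (Fin n) → ℝ) (hφint : Integrable φ volume)
    (hφnn : ∀ y, 0 ≤ φ y) (ε : ℝ) (hε0 : 0 < ε) (hεδ : ε < δ / 2)
    (hφsupp : Function.support φ ⊆ Metric.closedBall z ε) (d : ℕ) :
    (1 + 3 * δ ^ 2 / (4 * (ρ ^ 2 - δ ^ 2))) ^ (2 * (d / 2)) *
        (∫ y in Metric.closedBall z (δ / 2), φ y) ^ 2 / (μ X).toReal ≤
      sSup {t : ℝ | ∃ p : MvPolynomial (Fin n) ℝ, p.totalDegree ≤ d ∧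
        (∫ y, (eval y p) ^ 2 ∂μ) = 1 ∧ t = (∫ y, φ y * eval y p) ^ 2} := by
  subst hX
  have hδ0 : 0 < δ := by linarith
  have hD : 0 < ρ ^ 2 - δ ^ 2 := by nlinarith
  set D := ρ ^ 2 - δ ^ 2 with hDdef
  set A := 1 + 3 * δ ^ 2 / (4 * D) with hA
  have hA0 : 0 ≤ A := by positivity
  set k := d / 2 with hk
  let q : MvPolynomial (Fin n) ℝ :=
    C (1 + δ ^ 2 / D) - C (1 / D) * ∑ i, (X i - C (z i)) ^ 2
  have hq : ∀ y : EuclideanSpace ℝ (Fin n), eval y q = 1 + (δ ^ 2 - dist z y ^ 2) / D := by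
    intro y
    have : dist z y ^ 2 = ∑ i, (y i - z i) ^ 2 := by
      rw [dist_comm, EuclideanSpace.dist_eq, Real.sq_sqrt (by positivity)]
      simp [Real.dist_eq, sq_abs]
    rw [this]
    simp [q]
    ring
  have hqdeg : q.totalDegree ≤ 2 := by
    refine (totalDegree_sub _ _).trans (max_le ((totalDegree_C _).le.trans (by omega)) ?_)
    refine (totalDegree_mul _ _).trans ?_
    rw [totalDegree_C, zero_add]
    refine totalDegree_finsetSum_le fun i _ => ?_
    refine (totalDegree_pow _ _).trans ?_
    have : (X i - C (z i) : MvPolynomial (Fin n) ℝ).totalDegree ≤ 1 :=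
      (totalDegree_sub _ _).trans (max_le (by simp) (by simp))
    omega
  have hqX : ∀ y ∈ measureSupport μ, 0 ≤ eval y q ∧ eval y q ≤ 1 := by
    intro y hy
    have h1 : δ ≤ dist z y := hδ.2 ⟨y, hy, rfl⟩
    have h2 : dist z y ≤ ρ := hρ.2 ⟨y, hy, rfl⟩
    rw [hq]
    constructor
    · have : -1 ≤ (δ ^ 2 - dist z y ^ 2) / D := by
        rw [le_div_iff₀ hD]; nlinarith
      linarith
    · have : (δ ^ 2 - dist z y ^ 2) / D ≤ 0 :=
        div_nonpos_of_nonpos_of_nonneg (by nlinarith) hD.le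
      linarith
  have hqB : ∀ y ∈ Metric.closedBall z ε, A ≤ eval y q := by
    intro y hy
    rw [Metric.mem_closedBall, dist_comm] at hy
    have h0 : 0 ≤ dist z y := dist_nonneg
    rw [hq, hA]
    have : 3 * δ ^ 2 / (4 * D) = (3 / 4 * δ ^ 2) / D := by field_simp
    rw [this]
    gcongr
    nlinarith
  let r := q ^ k
  have hr : ∀ y : EuclideanSpace ℝ (Fin n), eval y r = (eval y q) ^ k := fun y => by simp [r]
  have hrdeg : r.totalDegree ≤ d := by
    refine (totalDegree_pow _ _).trans ?_
    calc k * q.totalDegree ≤ k * 2 := Nat.mul_le_mul_left _ hqdeg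
      _ ≤ d := by omega
  have hint : Integrable (fun y : EuclideanSpace ℝ (Fin n) => (eval y r) ^ 2) μ :=
    (memLp_eval μ hXc r).integrable_sq
  set c := ∫ y, (eval y r) ^ 2 ∂μ with hc
  have hcpos : 0 < c := by
    rcases (integral_nonneg (μ := μ) (f := fun y : EuclideanSpace ℝ (Fin n) => (eval y r) ^ 2)
      (fun y => sq_nonneg _)).lt_or_eq with h | h
    · exact h
    exfalso
    have h0 := (integral_eq_zero_iff_of_nonneg (fun y => sq_nonneg _) hint).1 h.symm
    obtain ⟨y, hy, hyδ⟩ := hδ.1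
    have h1 := eq_zero_of_ae μ r (by
      filter_upwards [h0] with y hy
      simpa using hy) y hy
    rw [hr, hq] at h1
    simp only at hyδ
    rw [hyδ] at h1
    simp at h1
  have hμX : μ (measureSupport μ) = μ Set.univ := by
    apply measure_congr
    filter_upwards [measureSupport_ae μ] with x hx
    exact propext ⟨fun _ => trivial, fun _ => hx⟩
  have hcle : c ≤ (μ (measureSupport μ)).toReal := by
    have : c ≤ ∫ y, (1 : ℝ) ∂μ := by
      apply integral_mono_ae hint (integrable_const _)
      filter_upwards [measureSupport_ae μ] with x hx
      simp only [hr]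
      exact pow_le_one₀ (pow_nonneg (hqX x hx).1 _) (pow_le_one₀ (hqX x hx).1 (hqX x hx).2)
    rw [hμX]
    simpa [Measure.real] using this
  set I := ∫ y in Metric.closedBall z (δ / 2), φ y with hI
  have hI0 : 0 ≤ I := integral_nonneg hφnn
  have hIeq : I = ∫ y, φ y := by
    apply setIntegral_eq_integral_of_forall_compl_eq_zero
    intro y hy
    by_contra h
    exact hy (Metric.closedBall_subset_closedBall hεδ.le (hφsupp h))
  have hJ : A ^ k * I ≤ ∫ y, φ y * eval y r := by
    rw [hIeq, ← integral_const_mul]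
    apply integral_mono (hφint.const_mul _) (integrable_phi z φ hφint ε hφsupp r)
    intro y
    simp only
    by_cases h : φ y = 0
    · simp [h]
    · rw [mul_comm, hr]
      exact mul_le_mul_of_nonneg_left (pow_le_pow_left₀ hA0 (hqB y (hφsupp h)) _) (hφnn y)
  have hs : (√c)⁻¹ ^ 2 = c⁻¹ := by rw [inv_pow, Real.sq_sqrt hcpos.le]
  have hmem : c⁻¹ * (∫ y, φ y * eval y r) ^ 2 ∈
      {t : ℝ | ∃ p : MvPolynomial (Fin n) ℝ, p.totalDegree ≤ d ∧
        (∫ y, (eval y p) ^ 2 ∂μ) = 1 ∧ t = (∫ y, φ y * eval y p) ^ 2} := by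
    refine ⟨C (√c)⁻¹ * r, ?_, ?_, ?_⟩
    · refine (totalDegree_mul _ _).trans ?_
      rw [totalDegree_C, zero_add]
      exact hrdeg
    · simp only [eval_mul, eval_C, mul_pow, hs]
      rw [integral_const_mul, ← hc, inv_mul_cancel₀ hcpos.ne']
    · simp only [eval_mul, eval_C]
      rw [← hs, ← mul_pow, ← integral_const_mul]
      congr 2
      ext y
      ring
  refine le_trans ?_ (le_csSup (bdd_set μ hXc hZar z φ hφint ε hφsupp d) hmem)
  calc A ^ (2 * k) * I ^ 2 / (μ (measureSupport μ)).toReal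
      ≤ A ^ (2 * k) * I ^ 2 / c := by gcongr
    _ = c⁻¹ * (A ^ k * I) ^ 2 := by rw [mul_pow, ← pow_mul, mul_comm k 2]; field_simp
    _ ≤ _ := by gcongr
end

section
/- Let X ⊆ ℝⁿ be compact, let f : X → ℝ be continuous with f(y) ≥ m > 0 for all y ∈ X, and let μ be the Borel measure on ℝⁿ given by dμ = f dλ on X (i.e. μ(A) = ∫_{A ∩ X} f dλ). Let z ∈ ℝⁿ and ε > 0 be such that the closed ball B(z, ε) is contained in X, and let φ : ℝⁿ → [0, ∞) be a square-integrable function supported in B(z, ε). Then for every natural number d, sup { (∫_{ℝⁿ} φ(y) p(y) dλ(y))² : p is a real polynomial of total degree at most d with ∫ p(y)² dμ(y) = 1 } ≤ (1/m) ∫_{ℝⁿ} φ(y)² dλ(y). In particular this supremum is bounded uniformly in d. -/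
open MeasureTheory MvPolynomial

/-- On-support uniform boundedness of the support-locator mollified
Christoffel–Darboux polynomial: if `μ = f dλ` on the compact set `X` with
`f ≥ m > 0` continuous, and `φ` is a nonnegative square-integrable mollifier
supported in a closed ball `B(z, ε) ⊆ X`, then for every degree `d`,
`sup { (∫ φ p dλ)² : deg p ≤ d, ‖p‖_{L²(μ)} = 1 } ≤ (1/m) ∫ φ² dλ`;
in particular this supremum is bounded uniformly in `d`. -/
theorem smcd_on_support_bounded {n : ℕ}
    (X : Set (EuclideanSpace ℝ (Fin n))) (hXc : IsCompact X)
    (f : EuclideanSpace ℝ (Fin n) → ℝ) (hf : ContinuousOn f X)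
    (m : ℝ) (hm : 0 < m) (hfm : ∀ y ∈ X, m ≤ f y)
    (μ : Measure (EuclideanSpace ℝ (Fin n)))
    (hμ : μ = (volume.restrict X).withDensity fun y => ENNReal.ofReal (f y))
    (z : EuclideanSpace ℝ (Fin n)) (ε : ℝ) (hε : 0 < ε)
    (hball : Metric.closedBall z ε ⊆ X)
    (φ : EuclideanSpace ℝ (Fin n) → ℝ) (hφnn : ∀ y, 0 ≤ φ y)
    (hφ2 : MemLp φ 2 volume)
    (hφsupp : Function.support φ ⊆ Metric.closedBall z ε) (d : ℕ) :
    sSup {t : ℝ | ∃ p : MvPolynomial (Fin n) ℝ, p.totalDegree ≤ d ∧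
        (∫ y, (eval y p) ^ 2 ∂μ) = 1 ∧ t = (∫ y, φ y * eval y p) ^ 2} ≤
      (1 / m) * ∫ y, (φ y) ^ 2 := by
  have hXm : MeasurableSet X := hXc.measurableSet
  have hP0 : 0 ≤ ∫ y, (φ y) ^ 2 := integral_nonneg fun y => sq_nonneg _
  refine Real.sSup_le ?_ (by positivity)
  rintro t ⟨p, -, hp1, rfl⟩
  have hq : Continuous fun y : EuclideanSpace ℝ (Fin n) => eval y p :=
    (MvPolynomial.continuous_eval p).comp (PiLp.continuous_ofLp 2 _)
  generalize hqd : (fun y : EuclideanSpace ℝ (Fin n) => eval y p) = q at hq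
  have hqe : ∀ y : EuclideanSpace ℝ (Fin n), eval y p = q y := fun y => congrFun hqd y
  simp only [hqe] at hp1 ⊢
  have hfae : AEMeasurable f (volume.restrict X) := hf.aemeasurable hXm
  have hX1 : ∫ y in X, f y * (q y) ^ 2 = 1 := by
    rw [← hp1, hμ, integral_withDensity_eq_integral_toReal_smul₀ hfae.ennreal_ofReal
      (by simp)]
    refine setIntegral_congr_fun hXm fun y hy => ?_
    simp [ENNReal.toReal_ofReal (hm.le.trans (hfm y hy))]
  have hi1 : IntegrableOn (fun y => f y * (q y) ^ 2) X :=
    (hf.mul (hq.pow 2).continuousOn).integrableOn_compact hXc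
  have hi2 : IntegrableOn (fun y => (φ y) ^ 2) X := hφ2.integrable_sq.integrableOn
  have hq2 : MemLp q 2 (volume.restrict X) := by
    rw [memLp_two_iff_integrable_sq hq.aestronglyMeasurable]
    exact (hq.pow 2).continuousOn.integrableOn_compact hXc
  have hi3 : IntegrableOn (fun y => φ y * q y) X :=
    (hφ2.restrict X).integrable_mul hq2
  have hs : ∀ y, y ∉ X → φ y = 0 := fun y hy => by
    by_contra h
    exact hy (hball (hφsupp h))
  have hA : ∫ y in X, φ y * q y = ∫ y, φ y * q y :=
    setIntegral_eq_integral_of_forall_compl_eq_zero fun y hy => by simp [hs y hy]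
  have hP : ∫ y in X, (φ y) ^ 2 = ∫ y, (φ y) ^ 2 :=
    setIntegral_eq_integral_of_forall_compl_eq_zero fun y hy => by simp [hs y hy]
  have key : ∀ t : ℝ, 0 ≤ (1 / m * ∫ y, (φ y) ^ 2) * (t * t) +
      (-2 * ∫ y, φ y * q y) * t + 1 := by
    intro t
    have h : ∫ y in X, (2 * t) * (φ y * q y) ≤
        ∫ y in X, ((t ^ 2 / m) * (φ y) ^ 2 + f y * (q y) ^ 2) := by
      refine setIntegral_mono_on (hi3.const_mul _) ((hi2.const_mul _).add hi1) hXm ?_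
      intro y hy
      have h1 : m * (q y) ^ 2 ≤ f y * (q y) ^ 2 :=
        mul_le_mul_of_nonneg_right (hfm y hy) (sq_nonneg _)
      have h2 : 0 ≤ (t * φ y - m * q y) ^ 2 / m := by positivity
      have h3 : (t * φ y - m * q y) ^ 2 / m =
          (t ^ 2 / m) * (φ y) ^ 2 - (2 * t) * (φ y * q y) + m * (q y) ^ 2 := by
        field_simp
        ring
      linarith
    rw [integral_add (hi2.const_mul _) hi1, integral_const_mul, integral_const_mul, hA, hP,
      hX1] at h
    have e : (1 / m * ∫ y, (φ y) ^ 2) * (t * t) = t ^ 2 / m * ∫ y, (φ y) ^ 2 := by ring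
    rw [e]
    linarith
  have hd := discrim_le_zero key
  unfold discrim at hd
  linarith
end

section
/- Let X ⊆ ℝⁿ be compact, let z ∈ ℝⁿ with z ∉ X, and set δ := dist(z, X) > 0. Let f : X → ℝ be measurable with f(y) ≥ m > 0 for all y ∈ X, and let μ be the Borel measure dμ = f dλ on X. Let (φ_{z,ε})_{ε > 0} be a family of nonnegative measurable functions on ℝⁿ with 0 < ∫_{ℝⁿ} φ_{z,ε}² dλ < ∞, satisfying the energy-concentration property: for every δ′ > 0, ∫_{{y : ‖y − z‖ > δ′}} φ_{z,ε}² dλ / ∫_{ℝⁿ} φ_{z,ε}² dλ → 0 as ε → 0. Then: (i) for every natural number d and every ε > 0, sup { (∫_X φ_{z,ε}(y) p(y) dλ(y))² : p a real polynomial of degree at most d with ∫ p² dμ = 1 } ≤ ∫_X (1/f(y)) φ_{z,ε}(y)² dλ(y) ≤ (1/m) ∫_{{y : ‖y − z‖ ≥ δ}} φ_{z,ε}(y)² dλ(y); and (ii) consequently, lim_{ε → 0} [ ∫_X (1/f(y)) φ_{z,ε}(y)² dλ(y) / ∫_{ℝⁿ} φ_{z,ε}(y)² dλ(y) ] = 0.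 -/
open MeasureTheory MvPolynomial Filter

/-- Off-support decay of the density-estimator mollified Christoffel–Darboux
polynomial: with `μ = f dλ` on the compact set `X`, `f ≥ m > 0`, `z ∉ X`,
`δ = dist(z, X)`, and a family of nonnegative square-integrable mollifiers
`φ_{z,ε}` whose `L²` energy concentrates around `z` as `ε → 0`:
(i) for every degree `d` and every `ε > 0`,
`sup { (∫_X φ_{z,ε} p dλ)² : deg p ≤ d, ‖p‖_{L²(μ)} = 1 }
  ≤ ∫_X (1/f) φ_{z,ε}² dλ ≤ (1/m) ∫_{‖y−z‖ ≥ δ} φ_{z,ε}² dλ`, and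
(ii) `∫_X (1/f) φ_{z,ε}² dλ / ∫ φ_{z,ε}² dλ → 0` as `ε → 0⁺`. -/
theorem dmcd_off_support_decay {n : ℕ}
    (X : Set (EuclideanSpace ℝ (Fin n))) (hXc : IsCompact X)
    (z : EuclideanSpace ℝ (Fin n)) (hz : z ∉ X)
    (δ : ℝ) (hδ : δ = Metric.infDist z X)
    (f : EuclideanSpace ℝ (Fin n) → ℝ) (hfmeas : Measurable f)
    (m : ℝ) (hm : 0 < m) (hfm : ∀ y ∈ X, m ≤ f y)
    (μ : Measure (EuclideanSpace ℝ (Fin n)))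
    (hμ : μ = (volume.restrict X).withDensity fun y => ENNReal.ofReal (f y))
    (φ : ℝ → EuclideanSpace ℝ (Fin n) → ℝ)
    (hφmeas : ∀ ε : ℝ, 0 < ε → Measurable (φ ε))
    (hφnn : ∀ ε : ℝ, 0 < ε → ∀ y, 0 ≤ φ ε y)
    (hφpos : ∀ ε : ℝ, 0 < ε → 0 < ∫ y, (φ ε y) ^ 2)
    (hφint : ∀ ε : ℝ, 0 < ε → Integrable (fun y => (φ ε y) ^ 2) volume)
    (hconc : ∀ δ' : ℝ, 0 < δ' →
      Tendsto (fun ε => (∫ y in {y | δ' < dist y z}, (φ ε y) ^ 2) / ∫ y, (φ ε y) ^ 2)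
        (nhdsWithin 0 (Set.Ioi 0)) (nhds 0)) :
    (∀ d : ℕ, ∀ ε : ℝ, 0 < ε →
      sSup {t : ℝ | ∃ p : MvPolynomial (Fin n) ℝ, p.totalDegree ≤ d ∧
          (∫ y, (eval y p) ^ 2 ∂μ) = 1 ∧
          t = (∫ y in X, φ ε y * eval y p) ^ 2} ≤
        (∫ y in X, (1 / f y) * (φ ε y) ^ 2) ∧
      (∫ y in X, (1 / f y) * (φ ε y) ^ 2) ≤
        (1 / m) * ∫ y in {y | δ ≤ dist y z}, (φ ε y) ^ 2) ∧
    Tendsto (fun ε => (∫ y in X, (1 / f y) * (φ ε y) ^ 2) / ∫ y, (φ ε y) ^ 2)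
      (nhdsWithin 0 (Set.Ioi 0)) (nhds 0) := by
  have hXm : MeasurableSet X := hXc.isClosed.measurableSet
  have hfi : ∀ ε : ℝ, 0 < ε →
      IntegrableOn (fun y => (1 / f y) * (φ ε y) ^ 2) X volume := by
    intro ε hε
    have h1 : IntegrableOn (fun y => (1 / m) * (φ ε y) ^ 2) X volume :=
      ((hφint ε hε).const_mul _).integrableOn
    refine Integrable.mono' h1 ?_ ?_
    · have := hφmeas ε hε
      exact Measurable.aestronglyMeasurable (by fun_prop)
    · refine (ae_restrict_iff' hXm).2 (Eventually.of_forall fun y hy => ?_)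
      have h2 := hfm y hy
      have h3 : 0 < f y := lt_of_lt_of_le hm h2
      rw [Real.norm_of_nonneg (by positivity)]
      gcongr
  have hnn : ∀ ε : ℝ, 0 ≤ ∫ y in X, (1 / f y) * (φ ε y) ^ 2 := by
    intro ε
    refine setIntegral_nonneg hXm fun y hy => ?_
    have h3 : 0 < f y := lt_of_lt_of_le hm (hfm y hy)
    positivity
  have hle : ∀ ε : ℝ, 0 < ε → ∀ S : Set (EuclideanSpace ℝ (Fin n)), X ⊆ S →
      (∫ y in X, (1 / f y) * (φ ε y) ^ 2) ≤ (1 / m) * ∫ y in S, (φ ε y) ^ 2 := by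
    intro ε hε S hS
    calc (∫ y in X, (1 / f y) * (φ ε y) ^ 2) ≤ ∫ y in X, (1 / m) * (φ ε y) ^ 2 := by
          refine setIntegral_mono_on (hfi ε hε)
            ((hφint ε hε).const_mul _).integrableOn hXm fun y hy => ?_
          have h2 := hfm y hy
          gcongr
      _ = (1 / m) * ∫ y in X, (φ ε y) ^ 2 := integral_const_mul _ _
      _ ≤ _ := by
          refine mul_le_mul_of_nonneg_left ?_ (by positivity)
          exact setIntegral_mono_set (hφint ε hε).integrableOn
            (Eventually.of_forall fun y => sq_nonneg _)
            (HasSubset.Subset.eventuallyLE hS)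
  refine ⟨fun d ε hε => ⟨?_, ?_⟩, ?_⟩
  · refine Real.sSup_le ?_ (hnn ε)
    rintro t ⟨p, -, hp, rfl⟩
    have hp2 : ∫ y in X, f y * (eval y p) ^ 2 = 1 := by
      rw [← hp, hμ, integral_withDensity_eq_integral_toReal_smul
        (by fun_prop) (Eventually.of_forall fun y => ENNReal.ofReal_lt_top)]
      refine setIntegral_congr_fun hXm fun y hy => ?_
      have h3 : 0 < f y := lt_of_lt_of_le hm (hfm y hy)
      simp [ENNReal.toReal_ofReal h3.le]
    have hpi : IntegrableOn (fun y => f y * (eval y p) ^ 2) X volume := by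
      by_contra h
      rw [integral_undef h] at hp2
      exact zero_ne_one hp2
    by_cases hI : IntegrableOn (fun y => φ ε y * eval y p) X volume
    · set s := ∫ y in X, φ ε y * eval y p with hs
      have key : 0 ≤ ∫ y in X, (((1 / f y) * (φ ε y) ^ 2 - (2 * s) * (φ ε y * eval y p))
          + s ^ 2 * (f y * (eval y p) ^ 2)) := by
        refine setIntegral_nonneg hXm fun y hy => ?_
        have h3 : 0 < f y := lt_of_lt_of_le hm (hfm y hy)
        have : ((1 / f y) * (φ ε y) ^ 2 - (2 * s) * (φ ε y * eval y p))
          + s ^ 2 * (f y * (eval y p) ^ 2)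
            = (1 / f y) * (φ ε y - s * f y * eval y p) ^ 2 := by
          field_simp
          ring
        rw [this]
        positivity
      have hsubi : IntegrableOn (fun y => (1 / f y) * (φ ε y) ^ 2
          - (2 * s) * (φ ε y * eval y p)) X volume := (hfi ε hε).sub (hI.const_mul _)
      rw [integral_add hsubi (hpi.const_mul _),
        integral_sub (hfi ε hε) (hI.const_mul _), integral_const_mul, integral_const_mul,
        hp2, ← hs] at key
      nlinarith
    · rw [integral_undef hI]
      simpa using hnn ε
  · refine hle ε hε _ fun y hy => ?_
    simp only [Set.mem_setOf_eq]
    rw [hδ, dist_comm]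
    exact Metric.infDist_le_dist_of_mem hy
  · obtain ⟨r, hr, hrX⟩ := Metric.isOpen_iff.1 hXc.isClosed.isOpen_compl z hz
    have hsub : X ⊆ {y | r / 2 < dist y z} := by
      intro y hy
      by_contra h
      simp only [Set.mem_setOf_eq, not_lt] at h
      exact hrX (Metric.mem_ball.2 (by linarith)) hy
    have hT := (hconc (r / 2) (by positivity)).const_mul (1 / m)
    rw [mul_zero] at hT
    refine squeeze_zero' ?_ ?_ hT
    · filter_upwards [self_mem_nhdsWithin] with ε hε
      exact div_nonneg (hnn ε) (hφpos ε hε).le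
    · filter_upwards [self_mem_nhdsWithin] with ε hε
      rw [← mul_div_assoc]
      exact div_le_div_of_nonneg_right (hle ε hε _ hsub) (hφpos ε hε).le
end

section
/- Let n ≥ 2 be an integer, set α := (n − 2)/2, and let k ≥ 1 be an integer. Then both integrals below are finite and nonzero, and (k²/4) · ∫_{−1}^{1} ((1 + t)/2)^{2k − 2} (1 − t²)^{α + 1/2} dt / ∫_{−1}^{1} ((1 + t)/2)^{2k} (1 − t²)^{α − 1/2} dt = k² (n − 1)/(4k + n − 3). In particular this quantity is O(k) as k → ∞. -/
open MeasureTheory intervalIntegral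

theorem aux1 (m : ℕ) (v t : ℝ) (ht : t ∈ Set.Ioo (-1:ℝ) 1) :
    ((1 + t) / 2) ^ (2 * m) * (1 - t ^ 2) ^ v
      = (1 / 4) ^ m * ((1 + t) ^ (2 * m + v) * (1 - t) ^ v) := by
  have h1 : 0 < 1 + t := by linarith [ht.1]
  have h2 : 0 < 1 - t := by linarith [ht.2]
  have e : 1 - t ^ 2 = (1 + t) * (1 - t) := by ring
  rw [e, Real.mul_rpow h1.le h2.le, Real.rpow_add h1]
  have : (1 + t) ^ (2 * (m:ℝ)) = (1 + t) ^ (2 * m) := by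
    rw [← Real.rpow_natCast]; push_cast; rfl
  rw [this, div_pow, pow_mul 2 2 m, div_pow]
  norm_num
  ring

/-- The gradient-energy ratio `R₁(k)` of the algebraic spherical mollifier
`φ_{x,k}(y) = ((1+⟨x,y⟩)/2)^k`: with `α = (n−2)/2` and `k ≥ 1`, both
Gegenbauer-weighted integrals are finite and nonzero, and
`(k²/4) ∫ ((1+t)/2)^{2k−2} (1−t²)^{α+1/2} dt / ∫ ((1+t)/2)^{2k} (1−t²)^{α−1/2} dt
  = k² (n−1)/(4k+n−3)`; in particular this quantity is `O(k)` as `k → ∞`. -/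
theorem gegenbauer_gradient_energy_ratio (n : ℕ) (hn : 2 ≤ n) (k : ℕ) (hk : 1 ≤ k)
    (α : ℝ) (hα : α = ((n : ℝ) - 2) / 2) :
    IntervalIntegrable
      (fun t : ℝ => ((1 + t) / 2) ^ (2 * k - 2) * (1 - t ^ 2) ^ (α + 1/2))
      volume (-1) 1 ∧
    IntervalIntegrable
      (fun t : ℝ => ((1 + t) / 2) ^ (2 * k) * (1 - t ^ 2) ^ (α - 1/2))
      volume (-1) 1 ∧
    (∫ t in (-1 : ℝ)..1,
        ((1 + t) / 2) ^ (2 * k - 2) * (1 - t ^ 2) ^ (α + 1/2)) ≠ 0 ∧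
    (∫ t in (-1 : ℝ)..1,
        ((1 + t) / 2) ^ (2 * k) * (1 - t ^ 2) ^ (α - 1/2)) ≠ 0 ∧
    ((k : ℝ) ^ 2 / 4) *
        (∫ t in (-1 : ℝ)..1,
          ((1 + t) / 2) ^ (2 * k - 2) * (1 - t ^ 2) ^ (α + 1/2)) /
      (∫ t in (-1 : ℝ)..1,
          ((1 + t) / 2) ^ (2 * k) * (1 - t ^ 2) ^ (α - 1/2)) =
      (k : ℝ) ^ 2 * ((n : ℝ) - 1) / (4 * (k : ℝ) + (n : ℝ) - 3) := by
  obtain ⟨m, rfl⟩ : ∃ m, k = m + 1 := ⟨k - 1, by omega⟩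
  have hn' : (2:ℝ) ≤ n := by exact_mod_cast hn
  obtain ⟨v, hv⟩ : ∃ v : ℝ, v = α + 1/2 := ⟨_, rfl⟩
  have hv2 : α - 1/2 = v - 1 := by rw [hv]; ring
  have hv0 : 0 < v := by rw [hv, hα]; linarith
  have hm : 2 * (m + 1) - 2 = 2 * m := by omega
  rw [hm, ← hv, hv2]
  have hm0 : (0:ℝ) ≤ m := Nat.cast_nonneg m
  obtain ⟨u, hu⟩ : ∃ u : ℝ, u = 2 * m + v + 1 := ⟨_, rfl⟩
  have hu0 : 0 < u := by rw [hu]; linarith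
  have e1 : ∀ t ∈ Set.Ioo (-1:ℝ) 1, ((1 + t) / 2) ^ (2 * m) * (1 - t ^ 2) ^ v
      = (1 / 4) ^ m * ((1 + t) ^ (u - 1) * (1 - t) ^ v) := by
    intro t ht
    rw [aux1 m v t ht, hu]; ring_nf
  have e2 : ∀ t ∈ Set.Ioo (-1:ℝ) 1, ((1 + t) / 2) ^ (2 * (m + 1)) * (1 - t ^ 2) ^ (v - 1)
      = (1 / 4) ^ (m + 1) * ((1 + t) ^ u * (1 - t) ^ (v - 1)) := by
    intro t ht
    rw [aux1 (m + 1) (v - 1) t ht, hu]; push_cast; ring_nf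
  have c1 : Continuous fun t : ℝ => (1 + t) ^ u :=
    (continuous_const.add continuous_id).rpow_const fun _ => Or.inr hu0.le
  have c2 : Continuous fun t : ℝ => (1 - t) ^ v :=
    (continuous_const.sub continuous_id).rpow_const fun _ => Or.inr hv0.le
  have I1 : IntervalIntegrable
      (fun t : ℝ => ((1 + t) / 2) ^ (2 * m) * (1 - t ^ 2) ^ v) volume (-1) 1 := by
    apply Continuous.intervalIntegrable
    refine Continuous.mul (by fun_prop) ?_
    exact Continuous.rpow_const (by fun_prop) fun _ => Or.inr hv0.le
  have I2 : IntervalIntegrable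
      (fun t : ℝ => ((1 + t) / 2) ^ (2 * (m + 1)) * (1 - t ^ 2) ^ (v - 1)) volume (-1) 1 := by
    have J : IntervalIntegrable (fun t : ℝ => (1 - t) ^ (v - 1)) volume (-1) 1 := by
      have := (intervalIntegral.intervalIntegrable_rpow' (a := 2) (b := 0)
        (r := v - 1) (by linarith)).comp_sub_left 1
      convert this using 1 <;> norm_num
    have J2 : IntervalIntegrable
        (fun t : ℝ => (1 / 4) ^ (m + 1) * ((1 + t) ^ u * (1 - t) ^ (v - 1))) volume (-1) 1 :=
      (J.continuousOn_mul c1.continuousOn).const_mul _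
    rw [intervalIntegrable_iff_integrableOn_Ioo_of_le (by norm_num)] at J2 ⊢
    exact J2.congr_fun (fun t ht => (e2 t ht).symm) measurableSet_Ioo
  have P1 : 0 < ∫ t in (-1 : ℝ)..1, ((1 + t) / 2) ^ (2 * m) * (1 - t ^ 2) ^ v := by
    refine intervalIntegral.intervalIntegral_pos_of_pos_on I1 (fun t ht => ?_) (by norm_num)
    rw [e1 t ht]
    have h1 : 0 < 1 + t := by linarith [ht.1]
    have h2 : 0 < 1 - t := by linarith [ht.2]
    positivity
  have P2 : 0 < ∫ t in (-1 : ℝ)..1,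
      ((1 + t) / 2) ^ (2 * (m + 1)) * (1 - t ^ 2) ^ (v - 1) := by
    refine intervalIntegral.intervalIntegral_pos_of_pos_on I2 (fun t ht => ?_) (by norm_num)
    rw [e2 t ht]
    have h1 : 0 < 1 + t := by linarith [ht.1]
    have h2 : 0 < 1 - t := by linarith [ht.2]
    positivity
  refine ⟨I1, I2, P1.ne', P2.ne', ?_⟩
  have key := intervalIntegral.integral_eq_sub_of_hasDerivAt_of_le (a := -1) (b := 1)
    (f := fun t : ℝ => (1 / 4) ^ m * ((1 + t) ^ u * (1 - t) ^ v))
    (f' := fun t : ℝ => u * (((1 + t) / 2) ^ (2 * m) * (1 - t ^ 2) ^ v)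
      - (4 * v) * (((1 + t) / 2) ^ (2 * (m + 1)) * (1 - t ^ 2) ^ (v - 1)))
    (by norm_num) (continuous_const.mul (c1.mul c2)).continuousOn
    (fun t ht => by
      have h1 : 0 < 1 + t := by linarith [ht.1]
      have h2 : 0 < 1 - t := by linarith [ht.2]
      have d1 := ((hasDerivAt_id t).const_add 1).rpow_const (p := u) (Or.inl h1.ne')
      have d2 := ((hasDerivAt_id t).const_sub 1).rpow_const (p := v) (Or.inl h2.ne')
      have d := (d1.mul d2).const_mul ((1 / 4 : ℝ) ^ m)
      refine d.congr_deriv ?_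
      simp only [id]
      rw [e1 t ht, e2 t ht]
      ring)
    ((I1.const_mul _).sub (I2.const_mul _))
  rw [intervalIntegral.integral_sub (I1.const_mul _) (I2.const_mul _),
    intervalIntegral.integral_const_mul, intervalIntegral.integral_const_mul] at key
  have z1 : (1 + (-1 : ℝ)) ^ u = 0 := by norm_num [Real.zero_rpow hu0.ne']
  have z2 : (1 - (1 : ℝ)) ^ v = 0 := by norm_num [Real.zero_rpow hv0.ne']
  rw [z1, z2] at key
  set A := ∫ t in (-1 : ℝ)..1, ((1 + t) / 2) ^ (2 * m) * (1 - t ^ 2) ^ v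
  set B := ∫ t in (-1 : ℝ)..1, ((1 + t) / 2) ^ (2 * (m + 1)) * (1 - t ^ 2) ^ (v - 1)
  have hd : 4 * ((m + 1 : ℕ) : ℝ) + n - 3 = 2 * u := by
    rw [hu, hv, hα]; push_cast; ring
  have hnum : (n : ℝ) - 1 = 2 * v := by rw [hv, hα]; ring
  rw [hd, hnum, div_eq_div_iff P2.ne' (by positivity)]
  linear_combination (((m + 1 : ℕ) : ℝ) ^ 2 / 2) * key
end

section
/- Let n ≥ 2, let S := S^{n−1} be the unit sphere in ℝⁿ, and let λ be the rotation-invariant (normalized surface) probability measure on S. For x ∈ S and an integer k ≥ 0 define φ_{x,k}(y) := ((1 + ⟨x, y⟩)/2)^k. Then for every x ∈ S and k ≥ 0, ∫_S (1 − ⟨x, y⟩) φ_{x,k}(y)² dλ(y) / ∫_S φ_{x,k}(y)² dλ(y) = (n − 1)/(2k + n − 1). In particular this quantity is independent of x and tends to 0 as k → ∞. -/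
open MeasureTheory RealInnerProductSpace


lemma aux_integrable {n : ℕ} (μ : Measure (EuclideanSpace ℝ (Fin n))) [IsProbabilityMeasure μ]
    (hsphere : ∀ᵐ y ∂μ, ‖y‖ = 1) (g : EuclideanSpace ℝ (Fin n) → ℝ) (hg : Continuous g) :
    Integrable g μ := by
  obtain ⟨C, hC⟩ := (isCompact_sphere (0 : EuclideanSpace ℝ (Fin n)) 1).exists_bound_of_continuousOn
    hg.continuousOn
  refine Integrable.of_bound hg.aestronglyMeasurable C ?_
  filter_upwards [hsphere] with y hy
  exact hC y (by simpa using hy)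

lemma aux_bounds {s w c d : ℝ} (hs : |s| ≤ 1) (hw : |w| ≤ 1) (hc : |c| ≤ 1) (hd : |d| ≤ 1) :
    |c * s + d * w| ≤ 2 := by
  have h1 : |c * s| ≤ 1 := by rw [abs_mul]; exact mul_le_one₀ hc (abs_nonneg _) hs
  have h2 : |d * w| ≤ 1 := by rw [abs_mul]; exact mul_le_one₀ hd (abs_nonneg _) hw
  linarith [abs_add_le (c * s) (d * w)]

lemma aux_rot {n : ℕ}
    (μ : Measure (EuclideanSpace ℝ (Fin n))) [IsProbabilityMeasure μ]
    (hinv : ∀ e : EuclideanSpace ℝ (Fin n) ≃ₗᵢ[ℝ] EuclideanSpace ℝ (Fin n),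
      Measure.map e μ = μ)
    (x v : EuclideanSpace ℝ (Fin n)) (hx : ‖x‖ = 1) (hv : ‖v‖ = 1) (hxv : ⟪x, v⟫ = 0) (m : ℕ)
    (a : ℝ) :
    ∫ y, (1 + (Real.cos a * ⟪x, y⟫ + Real.sin a * ⟪v, y⟫)) ^ m *
      (Real.cos a * ⟪v, y⟫ + (-Real.sin a) * ⟪x, y⟫) ∂μ =
    - ∫ y, (1 + ⟪x, y⟫) ^ m * ⟪v, y⟫ ∂μ := by
  have hxx : ⟪x, x⟫ = 1 := by rw [real_inner_self_eq_norm_sq, hx]; norm_num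
  have hvv : ⟪v, v⟫ = 1 := by rw [real_inner_self_eq_norm_sq, hv]; norm_num
  have hvx : ⟪v, x⟫ = 0 := by rw [real_inner_comm]; exact hxv
  obtain ⟨b, rfl⟩ : ∃ b, a = 2 * b := ⟨a / 2, by ring⟩
  set u := Real.cos b • x + Real.sin b • v with hu
  have hcs := Real.sin_sq_add_cos_sq b
  have hun : ‖u‖ = 1 := by
    have : ‖u‖ ^ 2 = 1 := by
      rw [← real_inner_self_eq_norm_sq, hu]
      simp only [inner_add_left, inner_add_right, real_inner_smul_left, real_inner_smul_right,
        hxx, hvv, hxv, hvx]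
      linarith
    nlinarith [norm_nonneg u]
  have hR : ∀ y, (ℝ ∙ u).reflection y = (2 * ⟪u, y⟫) • u - y := by
    intro y
    rw [Submodule.reflection_singleton_apply, hun]
    simp [two_smul, two_mul, add_smul]
  have hxR : ∀ y, ⟪x, (ℝ ∙ u).reflection y⟫ =
      Real.cos (2 * b) * ⟪x, y⟫ + Real.sin (2 * b) * ⟪v, y⟫ := by
    intro y
    rw [hR, hu]
    simp only [inner_sub_right, inner_add_left, inner_add_right, real_inner_smul_left,
      real_inner_smul_right, hxx, hvv, hxv, hvx, Real.cos_two_mul, Real.sin_two_mul]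
    ring
  have hvR : ∀ y, ⟪v, (ℝ ∙ u).reflection y⟫ =
      - (Real.cos (2 * b) * ⟪v, y⟫ + (-Real.sin (2 * b)) * ⟪x, y⟫) := by
    intro y
    rw [hR, hu]
    simp only [inner_sub_right, inner_add_left, inner_add_right, real_inner_smul_left,
      real_inner_smul_right, hxx, hvv, hxv, hvx, Real.cos_two_mul, Real.sin_two_mul]
    linear_combination (2 * ⟪v, y⟫) * hcs
  have key : ∫ y, (1 + ⟪x, y⟫) ^ m * ⟪v, y⟫ ∂μ =
      ∫ y, (1 + ⟪x, (ℝ ∙ u).reflection y⟫) ^ m * ⟪v, (ℝ ∙ u).reflection y⟫ ∂μ := by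
    conv_lhs => rw [← hinv ((ℝ ∙ u).reflection)]
    rw [integral_map]
    · exact (LinearIsometryEquiv.continuous _).aemeasurable
    · exact Continuous.aestronglyMeasurable (by fun_prop)
  rw [key, ← integral_neg]
  congr 1
  ext y
  rw [hxR, hvR]
  ring

lemma aux_parts {n : ℕ}
    (μ : Measure (EuclideanSpace ℝ (Fin n))) [IsProbabilityMeasure μ]
    (hsphere : ∀ᵐ y ∂μ, ‖y‖ = 1)
    (hinv : ∀ e : EuclideanSpace ℝ (Fin n) ≃ₗᵢ[ℝ] EuclideanSpace ℝ (Fin n),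
      Measure.map e μ = μ)
    (x v : EuclideanSpace ℝ (Fin n)) (hx : ‖x‖ = 1) (hv : ‖v‖ = 1) (hxv : ⟪x, v⟫ = 0) (m : ℕ) :
    ∫ y, (m * (1 + ⟪x, y⟫) ^ (m - 1) * ⟪v, y⟫ ^ 2) ∂μ = ∫ y, (1 + ⟪x, y⟫) ^ m * ⟪x, y⟫ ∂μ := by
  let F : ℝ → EuclideanSpace ℝ (Fin n) → ℝ := fun a y =>
    (1 + (Real.cos a * ⟪x, y⟫ + Real.sin a * ⟪v, y⟫)) ^ m *
      (Real.cos a * ⟪v, y⟫ + (-Real.sin a) * ⟪x, y⟫)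
  let F' : ℝ → EuclideanSpace ℝ (Fin n) → ℝ := fun a y =>
    (m * (1 + (Real.cos a * ⟪x, y⟫ + Real.sin a * ⟪v, y⟫)) ^ (m - 1) *
      (-Real.sin a * ⟪x, y⟫ + Real.cos a * ⟪v, y⟫)) *
      (Real.cos a * ⟪v, y⟫ + (-Real.sin a) * ⟪x, y⟫) +
    (1 + (Real.cos a * ⟪x, y⟫ + Real.sin a * ⟪v, y⟫)) ^ m *
      (-Real.sin a * ⟪v, y⟫ + (-Real.cos a) * ⟪x, y⟫)
  have hF : ∀ a, Continuous (F a) := fun a => by fun_prop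
  have hF' : ∀ a, Continuous (F' a) := fun a => by fun_prop
  have hd := hasDerivAt_integral_of_dominated_loc_of_deriv_le (μ := μ) (F := F) (F' := F')
    (x₀ := (0:ℝ)) (s := Set.univ) (bound := fun _ => (m * 3 ^ (m - 1) * 2) * 2 + 3 ^ m * 2)
    Filter.univ_mem (Filter.Eventually.of_forall fun a => (hF a).aestronglyMeasurable)
    (aux_integrable μ hsphere _ (hF 0)) (hF' 0).aestronglyMeasurable
    (by
      filter_upwards [hsphere] with y hy a _
      have hs : |⟪x, y⟫| ≤ 1 := by simpa [hx, hy] using abs_real_inner_le_norm x y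
      have hw : |⟪v, y⟫| ≤ 1 := by simpa [hv, hy] using abs_real_inner_le_norm v y
      have hc := Real.abs_cos_le_one a
      have hd := Real.abs_sin_le_one a
      have hc' : |-Real.cos a| ≤ 1 := by rwa [abs_neg]
      have hd' : |-Real.sin a| ≤ 1 := by rwa [abs_neg]
      have h1 := aux_bounds hs hw hc hd
      have h2 := aux_bounds hs hw hd' hc
      have h3 := aux_bounds hw hs hc hd'
      have h4 := aux_bounds hw hs hd' hc'
      have h5 : |1 + (Real.cos a * ⟪x, y⟫ + Real.sin a * ⟪v, y⟫)| ≤ 3 := by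
        have := abs_add_le 1 (Real.cos a * ⟪x, y⟫ + Real.sin a * ⟪v, y⟫)
        rw [abs_one] at this
        linarith
      rw [Real.norm_eq_abs]
      refine (abs_add_le _ _).trans ?_
      simp only [abs_mul, abs_pow, Nat.abs_cast] at *
      gcongr)
    (integrable_const _)
    (by
      refine Filter.Eventually.of_forall fun y a _ => ?_
      have h1 := (((Real.hasDerivAt_cos a).mul_const ⟪x, y⟫).add
        ((Real.hasDerivAt_sin a).mul_const ⟪v, y⟫)).const_add 1
      have h2 := (((Real.hasDerivAt_cos a).mul_const ⟪v, y⟫).add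
        ((Real.hasDerivAt_sin a).neg.mul_const ⟪x, y⟫))
      exact (h1.pow m).mul h2)
  have h0 : (fun a => ∫ y, F a y ∂μ) = fun _ => - ∫ y, (1 + ⟪x, y⟫) ^ m * ⟪v, y⟫ ∂μ :=
    funext fun a => aux_rot μ hinv x v hx hv hxv m a
  have h1 := hd.2
  rw [h0] at h1
  have h2 : ∫ y, F' 0 y ∂μ = 0 := h1.unique (hasDerivAt_const _ _)
  have h3 : ∫ y, F' 0 y ∂μ = ∫ y, (m * (1 + ⟪x, y⟫) ^ (m - 1) * ⟪v, y⟫ ^ 2) -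
      (1 + ⟪x, y⟫) ^ m * ⟪x, y⟫ ∂μ := by
    congr 1
    ext y
    simp only [F', Real.cos_zero, Real.sin_zero]
    ring
  rw [h3, integral_sub (aux_integrable μ hsphere _ (by fun_prop))
    (aux_integrable μ hsphere _ (by fun_prop))] at h2
  linarith

lemma aux_sum {n : ℕ} (hn : 2 ≤ n)
    (μ : Measure (EuclideanSpace ℝ (Fin n))) [IsProbabilityMeasure μ]
    (hsphere : ∀ᵐ y ∂μ, ‖y‖ = 1)
    (hinv : ∀ e : EuclideanSpace ℝ (Fin n) ≃ₗᵢ[ℝ] EuclideanSpace ℝ (Fin n),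
      Measure.map e μ = μ)
    (x : EuclideanSpace ℝ (Fin n)) (hx : ‖x‖ = 1) (m : ℕ) :
    ∫ y, (m * ((1 - ⟪x, y⟫) * (1 + ⟪x, y⟫) ^ m)) ∂μ =
      ((n : ℝ) - 1) * ∫ y, (1 + ⟪x, y⟫) ^ m * ⟪x, y⟫ ∂μ := by
  let i0 : Fin n := ⟨0, by omega⟩
  obtain ⟨b, hb⟩ := Orthonormal.exists_orthonormalBasis_extension_of_card_eq
    (𝕜 := ℝ) (E := EuclideanSpace ℝ (Fin n)) (ι := Fin n) (by simp) (v := fun _ => x) (s := {i0})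
    (by
      constructor
      · intro i; simpa using hx
      · intro i j hij; exact absurd (Subsingleton.elim i j) hij)
  have hb0 : b i0 = x := hb i0 rfl
  have hi : ∀ i ∈ Finset.univ.erase i0,
      ∫ y, (m * (1 + ⟪x, y⟫) ^ (m - 1) * ⟪b i, y⟫ ^ 2) ∂μ = ∫ y, (1 + ⟪x, y⟫) ^ m * ⟪x, y⟫ ∂μ := by
    intro i hi
    refine aux_parts μ hsphere hinv x (b i) hx (b.orthonormal.1 i) ?_ m
    rw [← hb0]
    exact b.orthonormal.2 (Finset.ne_of_mem_erase hi).symm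
  have hsum := Finset.sum_congr rfl hi
  rw [← integral_finsetSum _ (fun i _ => aux_integrable μ hsphere _ (by fun_prop)),
    Finset.sum_const, Finset.card_erase_of_mem (Finset.mem_univ _), Finset.card_univ,
    Fintype.card_fin, nsmul_eq_mul, Nat.cast_sub (by omega), Nat.cast_one] at hsum
  rw [← hsum]
  apply integral_congr_ae
  filter_upwards [hsphere] with y hy
  have h1 : ∑ i, ⟪b i, y⟫ ^ 2 = 1 := by
    have := b.sum_sq_norm_inner_right y
    simpa [hy] using this
  rw [← Finset.add_sum_erase _ _ (Finset.mem_univ i0), hb0] at h1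
  rw [← Finset.mul_sum, eq_sub_of_add_eq' h1]
  rcases m with _ | m
  · simp
  · simp only [Nat.add_sub_cancel]
    ring

/-- Concentration of the algebraic spherical mollifiers
`φ_{x,k}(y) = ((1 + ⟨x,y⟩)/2)^k`: if `μ` is the rotation-invariant Borel
probability measure on the unit sphere `S^{n−1} ⊆ ℝⁿ` (characterized as a
probability measure concentrated on the sphere and invariant under every
linear isometry of `ℝⁿ`), then for every `x` on the sphere and every `k`,
`∫ (1 − ⟨x,y⟩) φ_{x,k}(y)² dμ(y) / ∫ φ_{x,k}(y)² dμ(y) = (n−1)/(2k+n−1)`.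
In particular this quantity is independent of `x` and tends to `0` as
`k → ∞`. -/
theorem spherical_mollifier_concentration {n : ℕ} (hn : 2 ≤ n)
    (μ : Measure (EuclideanSpace ℝ (Fin n))) [IsProbabilityMeasure μ]
    (hsphere : ∀ᵐ y ∂μ, ‖y‖ = 1)
    (hinv : ∀ e : EuclideanSpace ℝ (Fin n) ≃ₗᵢ[ℝ] EuclideanSpace ℝ (Fin n),
      Measure.map e μ = μ)
    (x : EuclideanSpace ℝ (Fin n)) (hx : ‖x‖ = 1) (k : ℕ) :
    (∫ y, (1 - ⟪x, y⟫) * (((1 + ⟪x, y⟫) / 2) ^ k) ^ 2 ∂μ) /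
      (∫ y, (((1 + ⟪x, y⟫) / 2) ^ k) ^ 2 ∂μ) =
      ((n : ℝ) - 1) / (2 * (k : ℝ) + (n : ℝ) - 1) := by
  set A := ∫ y, (1 - ⟪x, y⟫) * (1 + ⟪x, y⟫) ^ (2 * k) ∂μ with hA
  set B := ∫ y, (1 + ⟪x, y⟫) ^ (2 * k) ∂μ with hB
  have e1 : ∫ y, (1 - ⟪x, y⟫) * (((1 + ⟪x, y⟫) / 2) ^ k) ^ 2 ∂μ = A * (1 / 2) ^ (2 * k) := by
    rw [hA, ← integral_mul_const]
    congr 1; ext y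
    rw [← pow_mul, mul_comm k 2, div_eq_mul_one_div, mul_pow]; ring
  have e2 : ∫ y, (((1 + ⟪x, y⟫) / 2) ^ k) ^ 2 ∂μ = B * (1 / 2) ^ (2 * k) := by
    rw [hB, ← integral_mul_const]
    congr 1; ext y
    rw [← pow_mul, mul_comm k 2, div_eq_mul_one_div, mul_pow]
  have h1 := aux_sum hn μ hsphere hinv x hx (2 * k)
  rw [integral_const_mul, ← hA] at h1
  have h2 : ∫ y, (1 + ⟪x, y⟫) ^ (2 * k) * ⟪x, y⟫ ∂μ = B - A := by
    rw [hA, hB, ← integral_sub (aux_integrable μ hsphere _ (by fun_prop))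
      (aux_integrable μ hsphere _ (by fun_prop))]
    congr 1; ext y; ring
  rw [h2] at h1
  push_cast at h1
  have hB0 : B ≠ 0 := by
    intro h
    have hint : Integrable (fun y => (1 + ⟪x, y⟫) ^ (2 * k)) μ :=
      aux_integrable μ hsphere _ (by fun_prop)
    rw [hB, integral_eq_zero_iff_of_nonneg (fun y => (even_two_mul k).pow_nonneg _) hint] at h
    have h3 : ∀ᵐ y ∂μ, 1 + ⟪x, y⟫ = 0 := by
      filter_upwards [h] with y hy
      exact eq_zero_of_pow_eq_zero hy
    have h4 : ∀ᵐ y ∂μ, 1 + ⟪x, -y⟫ = 0 := by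
      have h5 := h3
      rw [← hinv (LinearIsometryEquiv.neg ℝ)] at h5
      exact ae_of_ae_map (LinearIsometryEquiv.continuous _).aemeasurable h5
    obtain ⟨y, hy1, hy2⟩ := (h3.and h4).exists
    rw [inner_neg_right] at hy2
    linarith
  have hn' : (2 : ℝ) ≤ n := by exact_mod_cast hn
  have hk : (0 : ℝ) ≤ k := Nat.cast_nonneg k
  rw [e1, e2, mul_div_mul_right _ _ (by positivity), div_eq_div_iff hB0 (by linarith)]
  linarith
end

section
/- (Approximation error on the sphere, Lipschitz case.) Let n ≥ 2, let S := S^{n−1} be the unit sphere in ℝⁿ with rotation-invariant probability measure λ, and for x ∈ S and an integer k ≥ 0 let φ_{x,k}(y) := ((1 + ⟨x, y⟩)/2)^k. Suppose g : S → ℝ is Lipschitz with constant K with respect to the geodesic distance d_S(x, y) = arccos⟨x, y⟩, i.e. |g(y) − g(x)| ≤ K arccos⟨x, y⟩ for all x, y ∈ S. Then for every x ∈ S and every integer k ≥ 0, | ∫_S φ_{x,k}(y)² g(y) dλ(y) / ∫_S φ_{x,k}(y)² dλ(y) − g(x) | ≤ (K π / √2) · √((n − 1)/(2k + n − 1)).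 In particular the left-hand side is O(k^{−1/2}) uniformly in x. -/
open MeasureTheory RealInnerProductSpace

lemma sph_inner_abs {n : ℕ} {x y : EuclideanSpace ℝ (Fin n)} (hx : ‖x‖ = 1) (hy : ‖y‖ = 1) :
    |⟪x, y⟫| ≤ 1 := by
  have := abs_real_inner_le_norm x y
  rwa [hx, hy, one_mul] at this

lemma sph_integrable {n : ℕ} 
    (μ : Measure (EuclideanSpace ℝ (Fin n))) [IsProbabilityMeasure μ]
    (hsphere : ∀ᵐ y ∂μ, ‖y‖ = 1)
    (g : EuclideanSpace ℝ (Fin n) → ℝ)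
    (hg : ContinuousOn g (Metric.sphere 0 1)) : Integrable g μ := by
  have hr : μ.restrict (Metric.sphere 0 1) = μ := by
    apply Measure.restrict_eq_self_of_ae_mem
    filter_upwards [hsphere] with y hy
    simpa using hy
  rw [← hr]
  exact hg.integrableOn_compact (isCompact_sphere _ _)

lemma sph_deriv {n : ℕ} 
    (μ : Measure (EuclideanSpace ℝ (Fin n))) [IsProbabilityMeasure μ]
    (hsphere : ∀ᵐ y ∂μ, ‖y‖ = 1)
    (hinv : ∀ e : EuclideanSpace ℝ (Fin n) ≃ₗᵢ[ℝ] EuclideanSpace ℝ (Fin n),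
      Measure.map e μ = μ) (x e : EuclideanSpace ℝ (Fin n)) (hx : ‖x‖ = 1) (he : ‖e‖ = 1)
    (hxe : ⟪x, e⟫ = 0) (m : ℕ) :
    ∫ y, (- ⟪x, y⟫ * (1 + ⟪x, y⟫) ^ m + m * ⟪e, y⟫ ^ 2 * (1 + ⟪x, y⟫) ^ (m - 1)) ∂μ = 0 := by
  have hex : ⟪e, x⟫ = 0 := by rw [real_inner_comm]; exact hxe
  have hxx : ⟪x, x⟫ = 1 := by rw [real_inner_self_eq_norm_sq, hx]; norm_num
  have hee : ⟪e, e⟫ = 1 := by rw [real_inner_self_eq_norm_sq, he]; norm_num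
  set A : ℝ → EuclideanSpace ℝ (Fin n) → ℝ :=
    fun θ y => - Real.sin θ * ⟪x, y⟫ - Real.cos θ * ⟪e, y⟫ with hA
  set B : ℝ → EuclideanSpace ℝ (Fin n) → ℝ :=
    fun θ y => Real.cos θ * ⟪x, y⟫ - Real.sin θ * ⟪e, y⟫ with hB
  set F : ℝ → EuclideanSpace ℝ (Fin n) → ℝ := fun θ y => A θ y * (1 + B θ y) ^ m with hF
  set F' : ℝ → EuclideanSpace ℝ (Fin n) → ℝ := fun θ y =>
    - B θ y * (1 + B θ y) ^ m + m * A θ y ^ 2 * (1 + B θ y) ^ (m - 1) with hF'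
  have hAc : ∀ θ, Continuous (A θ) := fun θ => by simp only [hA]; fun_prop
  have hBc : ∀ θ, Continuous (B θ) := fun θ => by simp only [hB]; fun_prop
  have hFc : ∀ θ, Continuous (F θ) := fun θ => by
    have := hAc θ; have := hBc θ; simp only [hF]; fun_prop
  have hFc' : ∀ θ, Continuous (F' θ) := fun θ => by
    have := hAc θ; have := hBc θ; simp only [hF']; fun_prop
  have hconst : ∀ θ, ∫ y, F θ y ∂μ = ∫ y, ⟪e, y⟫ * (1 + ⟪x, y⟫) ^ m ∂μ := by
    intro θ
    set v : EuclideanSpace ℝ (Fin n) := Real.cos (θ/2) • e + Real.sin (θ/2) • x with hv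
    have hvx : ⟪v, x⟫ = Real.sin (θ/2) := by
      simp [hv, inner_add_left, inner_smul_left, hex, hx]
    have hve : ⟪v, e⟫ = Real.cos (θ/2) := by
      simp [hv, inner_add_left, inner_smul_left, hxe, he]
    have hvy : ∀ y, ⟪v, y⟫ = Real.cos (θ/2) * ⟪e, y⟫ + Real.sin (θ/2) * ⟪x, y⟫ := by
      intro y
      simp [hv, inner_add_left, inner_smul_left]
    have hvv : ‖v‖ = 1 := by
      have : ‖v‖ ^ 2 = 1 := by
        rw [← real_inner_self_eq_norm_sq, hvy, real_inner_comm, hve, real_inner_comm, hvx]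
        nlinarith [Real.sin_sq_add_cos_sq (θ/2)]
      nlinarith [norm_nonneg v]
    set R := (ℝ ∙ v)ᗮ.reflection with hR
    have hRy : ∀ y, R y = y - (2 * ⟪v, y⟫) • v := by
      intro y
      rw [hR, Submodule.reflection_orthogonal_apply, Submodule.reflection_singleton_apply]
      simp [hvv, two_smul, mul_smul]
    have h1 := hinv R
    have h2 : ∫ y, ⟪e, y⟫ * (1 + ⟪x, y⟫) ^ m ∂μ
        = ∫ y, ⟪e, R y⟫ * (1 + ⟪x, R y⟫) ^ m ∂μ := by
      conv_lhs => rw [← h1]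
      rw [integral_map (by fun_prop) (by
        apply Continuous.aestronglyMeasurable; fun_prop)]
    rw [h2]
    congr 1
    ext y
    have hc : Real.cos θ = 2 * Real.cos (θ/2) ^ 2 - 1 := by
      rw [← Real.cos_two_mul]; ring_nf
    have hs : Real.sin θ = 2 * Real.sin (θ/2) * Real.cos (θ/2) := by
      rw [← Real.sin_two_mul]; ring_nf
    have e1 : ⟪e, R y⟫ = A θ y := by
      rw [hRy, inner_sub_right, inner_smul_right, real_inner_comm v e, hve, hvy]
      simp only [hA]; rw [hc, hs]; ring
    have e2 : ⟪x, R y⟫ = B θ y := by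
      rw [hRy, inner_sub_right, inner_smul_right, real_inner_comm v x, hvx, hvy]
      simp only [hB]; rw [hc, hs]
      linear_combination (-2 * ⟪x, y⟫) * Real.sin_sq_add_cos_sq (θ/2)
    rw [e1, e2]
  have hAB : ∀ θ y, ‖y‖ = 1 → |A θ y| ≤ 2 ∧ |B θ y| ≤ 2 := by
    intro θ y hy
    have a1 := sph_inner_abs hx hy
    have a2 := sph_inner_abs he hy
    have b1 := Real.abs_sin_le_one θ
    have b2 := Real.abs_cos_le_one θ
    have c : ∀ a b : ℝ, |a| ≤ 1 → |b| ≤ 1 → |a * b| ≤ 1 := fun a b h h' => by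
      rw [abs_mul]; exact mul_le_one₀ h (abs_nonneg _) h'
    have c1 := abs_le.1 (c _ _ b1 a1)
    have c2 := abs_le.1 (c _ _ b2 a1)
    have c3 := abs_le.1 (c _ _ b1 a2)
    have c4 := abs_le.1 (c _ _ b2 a2)
    simp only [hA, hB]
    constructor <;> rw [abs_le] <;> constructor <;> linarith
  have key := hasDerivAt_integral_of_dominated_loc_of_deriv_le (μ := μ) (F := F) (F' := F')
    (x₀ := 0) (s := Set.univ) (bound := fun _ => 2 * 3 ^ m + m * 2 ^ 2 * 3 ^ (m - 1))
    Filter.univ_mem (Filter.Eventually.of_forall fun θ => (hFc θ).aestronglyMeasurable)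
    (sph_integrable μ hsphere _ (hFc 0).continuousOn) (hFc' 0).aestronglyMeasurable
    (by
      filter_upwards [hsphere] with y hy θ _
      obtain ⟨h1, h2⟩ := hAB θ y hy
      have h3 : |1 + B θ y| ≤ 3 := by
        rw [abs_le] at *; constructor <;> linarith
      rw [Real.norm_eq_abs]
      simp only [hF']
      refine (abs_add_le _ _).trans ?_
      simp only [abs_mul, abs_pow, abs_neg, Nat.abs_cast]
      gcongr)
    (integrable_const _)
    (by
      refine Filter.Eventually.of_forall fun y θ _ => ?_
      have dA : HasDerivAt (fun θ => A θ y) (- B θ y) θ := by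
        have := ((Real.hasDerivAt_sin θ).neg.mul_const ⟪x, y⟫).sub
          ((Real.hasDerivAt_cos θ).mul_const ⟪e, y⟫)
        exact this.congr_deriv (by simp only [hB]; ring)
      have dB : HasDerivAt (fun θ => B θ y) (A θ y) θ := by
        have := ((Real.hasDerivAt_cos θ).mul_const ⟪x, y⟫).sub
          ((Real.hasDerivAt_sin θ).mul_const ⟪e, y⟫)
        exact this
      have := dA.mul ((dB.const_add 1).pow m)
      exact this.congr_deriv (by simp only [hF', Pi.pow_apply]; ring))
  have k2 := key.2
  have : (fun θ => ∫ y, F θ y ∂μ) = fun _ => ∫ y, ⟪e, y⟫ * (1 + ⟪x, y⟫) ^ m ∂μ := funext hconst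
  rw [this] at k2
  have k3 := k2.unique (hasDerivAt_const _ _)
  rw [← k3]
  simp [hF', hA, hB]

lemma sph_identity {n : ℕ}
    (μ : Measure (EuclideanSpace ℝ (Fin n))) [IsProbabilityMeasure μ]
    (hsphere : ∀ᵐ y ∂μ, ‖y‖ = 1)
    (hinv : ∀ e : EuclideanSpace ℝ (Fin n) ≃ₗᵢ[ℝ] EuclideanSpace ℝ (Fin n),
      Measure.map e μ = μ) (x : EuclideanSpace ℝ (Fin n)) (hx : ‖x‖ = 1) (hn : 2 ≤ n) (m : ℕ) :
    ∫ y, (m * (1 - ⟪x, y⟫) * (1 + ⟪x, y⟫) ^ m - (n - 1) * (⟪x, y⟫ * (1 + ⟪x, y⟫) ^ m)) ∂μ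
      = 0 := by
  let i0 : Fin n := ⟨0, by omega⟩
  obtain ⟨b, hb⟩ := Orthonormal.exists_orthonormalBasis_extension_of_card_eq (𝕜 := ℝ)
    (E := EuclideanSpace ℝ (Fin n)) (ι := Fin n) (by simp) (v := fun _ => x) (s := {i0}) (by
      constructor
      · intro i; simpa using hx
      · intro i j hij
        exact absurd (Subsingleton.elim i j) hij)
  have hb0 : b i0 = x := hb i0 rfl
  have hsum : ∑ i ∈ Finset.univ.erase i0,
      ∫ y, (- ⟪x, y⟫ * (1 + ⟪x, y⟫) ^ m + m * ⟪b i, y⟫ ^ 2 * (1 + ⟪x, y⟫) ^ (m - 1)) ∂μ = 0 := by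
    apply Finset.sum_eq_zero
    intro i hi
    apply sph_deriv μ hsphere hinv x (b i) hx (b.orthonormal.1 i)
    rw [← hb0]
    exact b.orthonormal.2 (Finset.ne_of_mem_erase hi).symm
  rw [← integral_finsetSum _ (fun i _ => sph_integrable μ hsphere _ (by fun_prop))] at hsum
  rw [← hsum]
  apply integral_congr_ae
  filter_upwards [hsphere] with y hy
  have hq : ∑ i, ⟪b i, y⟫ ^ 2 = 1 := by
    rw [b.sum_sq_inner_right, hy]; norm_num
  rw [← Finset.add_sum_erase _ _ (Finset.mem_univ i0), hb0] at hq
  rw [Finset.sum_add_distrib, ← Finset.sum_mul, ← Finset.sum_mul, ← Finset.mul_sum, Finset.sum_const,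
    Finset.card_erase_of_mem (Finset.mem_univ _), eq_sub_of_add_eq' hq]
  simp only [Finset.card_univ, Fintype.card_fin, nsmul_eq_mul]
  rw [Nat.cast_sub (by omega)]
  rcases m with _ | m
  · simp
  · simp only [Nat.add_sub_cancel]; push_cast; ring

lemma sph_arccos {t : ℝ} (h : |t| ≤ 1) : Real.arccos t ≤ Real.pi * Real.sqrt ((1 - t) / 2) := by
  set θ := Real.arccos t with hθ
  have h0 := Real.arccos_nonneg t
  have h1 := Real.arccos_le_pi t
  have ht : Real.cos θ = t := Real.cos_arccos (abs_le.1 h).1 (abs_le.1 h).2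
  have hs := Real.mul_le_sin (x := θ / 2) (by positivity) (by linarith)
  have : Real.sqrt ((1 - t) / 2) = Real.sin (θ/2) := by
    rw [Real.sin_half_eq_sqrt h0 (by linarith [Real.pi_pos]), ht]
  rw [this]
  have hp := Real.pi_pos
  calc θ = Real.pi * (2 / Real.pi * (θ / 2)) := by field_simp
    _ ≤ _ := by gcongr

/-- Approximation error on the sphere, Lipschitz case: let `μ` be the
rotation-invariant Borel probability measure on the unit sphere
`S^{n−1} ⊆ ℝⁿ` (characterized as a probability measure concentrated on the
sphere and invariant under every linear isometry of `ℝⁿ`), let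
`φ_{x,k}(y) = ((1 + ⟨x,y⟩)/2)^k`, and let `g` be Lipschitz with constant `K`
with respect to the geodesic distance `arccos⟨x,y⟩` on the sphere.  Then for
every `x` on the sphere and every `k`,
`| ∫ φ_{x,k}² g dμ / ∫ φ_{x,k}² dμ − g(x) | ≤ (Kπ/√2) √((n−1)/(2k+n−1))`. -/
theorem spherical_approximation_error_lipschitz {n : ℕ} (hn : 2 ≤ n)
    (μ : Measure (EuclideanSpace ℝ (Fin n))) [IsProbabilityMeasure μ]
    (hsphere : ∀ᵐ y ∂μ, ‖y‖ = 1)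
    (hinv : ∀ e : EuclideanSpace ℝ (Fin n) ≃ₗᵢ[ℝ] EuclideanSpace ℝ (Fin n),
      Measure.map e μ = μ)
    (g : EuclideanSpace ℝ (Fin n) → ℝ) (K : ℝ)
    (hLip : ∀ x y : EuclideanSpace ℝ (Fin n), ‖x‖ = 1 → ‖y‖ = 1 →
      |g y - g x| ≤ K * Real.arccos ⟪x, y⟫) :
    ∀ x : EuclideanSpace ℝ (Fin n), ‖x‖ = 1 → ∀ k : ℕ,
      |(∫ y, (((1 + ⟪x, y⟫) / 2) ^ k) ^ 2 * g y ∂μ) /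
          (∫ y, (((1 + ⟪x, y⟫) / 2) ^ k) ^ 2 ∂μ) - g x| ≤
        (K * Real.pi / Real.sqrt 2) *
          Real.sqrt (((n : ℝ) - 1) / (2 * (k : ℝ) + (n : ℝ) - 1)) := by
  intro x hx k
  have hn' : (2 : ℝ) ≤ n := by exact_mod_cast hn
  have hk' : (0 : ℝ) ≤ k := Nat.cast_nonneg k
  have hK : 0 ≤ K := by
    have h := (abs_nonneg _).trans (hLip x (-x) hx (by simpa using hx))
    have hxx : ⟪x, -x⟫ = -1 := by rw [inner_neg_right, real_inner_self_eq_norm_sq, hx]; norm_num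
    rw [hxx, Real.arccos_neg_one] at h
    exact nonneg_of_mul_nonneg_left h Real.pi_pos
  have hgc : ContinuousOn g (Metric.sphere 0 1) := by
    intro z hz
    have hz1 : ‖z‖ = 1 := by simpa using hz
    rw [ContinuousWithinAt, tendsto_iff_dist_tendsto_zero]
    have hlim : Filter.Tendsto (fun y => K * Real.arccos ⟪z, y⟫)
        (nhdsWithin z (Metric.sphere 0 1)) (nhds 0) := by
      have hc : Continuous (fun y : EuclideanSpace ℝ (Fin n) => K * Real.arccos ⟪z, y⟫) :=
        continuous_const.mul (Real.continuous_arccos.comp (by fun_prop))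
      have := (hc.tendsto z).mono_left (nhdsWithin_le_nhds (s := Metric.sphere 0 1))
      simpa [hz1] using this
    refine squeeze_zero' (Filter.Eventually.of_forall fun _ => dist_nonneg) ?_ hlim
    filter_upwards [self_mem_nhdsWithin] with y hy
    rw [Real.dist_eq]
    exact hLip z y hz1 (by simpa using hy)
  -- integral facts
  have hid := sph_identity μ hsphere hinv x hx hn (2 * k)
  have hmean : ∫ y, ⟪x, y⟫ ∂μ = 0 := by
    have := sph_identity μ hsphere hinv x hx hn 0
    simp only [pow_zero, mul_one, Nat.cast_zero, zero_mul, zero_sub, integral_neg,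
      integral_const_mul, neg_eq_zero, mul_eq_zero] at this
    rcases this with h | h
    · linarith
    · exact h
  have hD1 : 1 ≤ ∫ y, (1 + ⟪x, y⟫) ^ (2 * k) ∂μ := by
    have h1 : ∫ y, (1 + ((2 * k : ℕ) : ℝ) * ⟪x, y⟫) ∂μ = 1 := by
      rw [integral_add (integrable_const _) (sph_integrable μ hsphere _ (by fun_prop)),
        integral_const_mul, hmean]
      simp
    refine h1.symm.le.trans ?_
    apply integral_mono_ae (sph_integrable μ hsphere _ (by fun_prop))
      (sph_integrable μ hsphere _ (by fun_prop))
    filter_upwards [hsphere] with y hy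
    have := (abs_le.1 (sph_inner_abs hx hy)).1
    have h2 : (-2 : ℝ) ≤ ⟪x, y⟫ := by linarith
    exact one_add_mul_le_pow h2 _
  set w : EuclideanSpace ℝ (Fin n) → ℝ := fun y => (((1 + ⟪x, y⟫) / 2) ^ k) ^ 2 with hw
  have hwc : Continuous w := by simp only [hw]; fun_prop
  have hw0 : ∀ y, 0 ≤ w y := fun y => sq_nonneg _
  have hw4 : ∀ y, (1 + ⟪x, y⟫) ^ (2 * k) = 4 ^ k * w y := by
    intro y
    simp only [hw]
    rw [← pow_mul, mul_comm k 2, div_pow, pow_mul 2 2 k]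
    norm_num
    field_simp
  set D := ∫ y, w y ∂μ with hD
  have hDpos : 0 < D := by
    simp only [hw4, integral_const_mul] at hD1
    have : 0 < (4 : ℝ) ^ k * D := by linarith
    exact pos_of_mul_pos_right this (by positivity)
  set Q := ∫ y, w y * ((1 - ⟪x, y⟫) / 2) ∂μ with hQ
  have hQD : (2 * k + n - 1) * (2 * Q) = (n - 1) * D := by
    have h1 : ∀ y, (((2 * k : ℕ) : ℝ) * (1 - ⟪x, y⟫) * (1 + ⟪x, y⟫) ^ (2 * k) -
        (n - 1) * (⟪x, y⟫ * (1 + ⟪x, y⟫) ^ (2 * k)))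
        = 4 ^ k * ((2 * k + n - 1) * 2 * (w y * ((1 - ⟪x, y⟫) / 2)) - (n - 1) * w y) := by
      intro y; rw [hw4]; push_cast; ring
    simp only [h1] at hid
    rw [integral_const_mul, integral_sub (sph_integrable μ hsphere _ (by fun_prop))
      (sph_integrable μ hsphere _ (by fun_prop)), integral_const_mul, integral_const_mul] at hid
    have h4 : (4 : ℝ) ^ k ≠ 0 := by positivity
    have := (mul_eq_zero.1 hid).resolve_left h4
    linarith
  have hden : (0 : ℝ) < 2 * k + n - 1 := by linarith
  set r := ((n : ℝ) - 1) / (2 * (k : ℝ) + (n : ℝ) - 1) with hr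
  have hrpos : 0 < r := div_pos (by linarith) hden
  set c := Real.sqrt (r / 2) with hc
  have hcpos : 0 < c := Real.sqrt_pos.2 (by positivity)
  have hc2 : c ^ 2 = r / 2 := Real.sq_sqrt (by positivity)
  have hQc : Q = c ^ 2 * D := by
    rw [hc2, hr]; field_simp; linarith
  have hfin : (K * Real.pi / Real.sqrt 2) * Real.sqrt r = K * Real.pi * c := by
    rw [hc, Real.sqrt_div hrpos.le]; ring
  rw [hfin]
  have hwg : Integrable (fun y => w y * g y) μ :=
    sph_integrable μ hsphere _ (hwc.continuousOn.mul hgc)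
  have hrew : (∫ y, w y * g y ∂μ) / D - g x = (∫ y, w y * (g y - g x) ∂μ) / D := by
    have : ∫ y, w y * (g y - g x) ∂μ = (∫ y, w y * g y ∂μ) - D * g x := by
      simp only [mul_sub]
      rw [integral_sub hwg (sph_integrable μ hsphere _ (by fun_prop)), integral_mul_const]
    rw [this]; field_simp
  rw [hrew, abs_div, abs_of_pos hDpos, div_le_iff₀ hDpos, ← Real.norm_eq_abs]
  have hbound : ∀ᵐ y ∂μ, ‖w y * (g y - g x)‖ ≤
      K * Real.pi / (2 * c) * (w y * ((1 - ⟪x, y⟫) / 2)) + K * Real.pi * c / 2 * w y := by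
    filter_upwards [hsphere] with y hy
    have ht := sph_inner_abs hx hy
    have hl := hLip x y hx hy
    have ha := sph_arccos ht
    set q := (1 - ⟪x, y⟫) / 2 with hq
    have hq0 : 0 ≤ q := by have := (abs_le.1 ht).2; rw [hq]; linarith
    have hs : Real.sqrt q ≤ q / (2 * c) + c / 2 := by
      have e : q / (2 * c) + c / 2 = (q + c ^ 2) / (2 * c) := by field_simp
      rw [e, le_div_iff₀ (by positivity)]
      nlinarith [sq_nonneg (Real.sqrt q - c), Real.sq_sqrt hq0]
    rw [Real.norm_eq_abs, abs_mul, abs_of_nonneg (hw0 y)]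
    calc w y * |g y - g x| ≤ w y * (K * (Real.pi * (q / (2 * c) + c / 2))) := by
          have := hw0 y
          have hp := Real.pi_pos.le
          gcongr
          refine hl.trans ?_
          gcongr
          refine ha.trans ?_
          gcongr
      _ = _ := by ring
  refine (norm_integral_le_of_norm_le ((sph_integrable μ hsphere _ (by fun_prop))) hbound).trans ?_
  rw [integral_add (sph_integrable μ hsphere _ (by fun_prop))
      (sph_integrable μ hsphere _ (by fun_prop)), integral_const_mul, integral_const_mul, ← hQ,
      ← hD, hQc]
  apply le_of_eq
  field_simp
  ring
end
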